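/- arXiv:1911.12432 — 2 statements merged into one kernel-verified Lean document; each statement's English description precedes it below -/
import Mathlib

section
/- Let θ > 0, let x be a feasible solution of LP1, and suppose there exists an order of the edges of G that is θ-flat with respect to x. Then there exists a d-distance matching M of G with θ·w(M) ≥ Σ_{e∈E} w_e x_e. -/
open Finset

/-- `M` is a `d`-distance matching of the bipartite graph with left node set `Fin n`
(ordered) and right node set `T`, whose edge set is `E`. -/
def DDM {n : ℕ} {T : Type*} [DecidableEq T] (d : ℕ) (E M : Finset (Fin n × T)) : Prop :=
  M ⊆ E ∧ (∀ e ∈ M, ∀ f ∈ M, e.1 = f.1 → e = f) ∧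
    (∀ e ∈ M, ∀ f ∈ M, e.2 = f.2 → e ≠ f → d ≤ Nat.dist e.1.val f.1.val)

/-- `x` is a feasible solution of LP1. -/
def FeasLP1 {n : ℕ} {T : Type*} [DecidableEq T]
    (d : ℕ) (E : Finset (Fin n × T)) (x : Fin n × T → ℝ) : Prop :=
  (∀ e, 0 ≤ x e) ∧ (∀ e ∉ E, x e = 0) ∧
  (∀ s : Fin n, ∑ e ∈ E.filter (fun e => e.1 = s), x e ≤ 1) ∧
  (∀ s : Fin n, ∀ t : T,
    ∑ e ∈ E.filter (fun e => e.2 = t ∧ s.val ≤ e.1.val ∧ e.1.val < s.val + d), x e ≤ 1)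

/-- The list `l` of edges is a `θ`-flat order with respect to `x`. -/
def IsFlatOrder {n : ℕ} {T : Type*} [DecidableEq T]
    (d : ℕ) (θ : ℝ) (x : Fin n × T → ℝ) (l : List (Fin n × T)) : Prop :=
  ∀ i : Fin l.length,
    (∑ j ∈ Finset.univ.filter
        (fun j : Fin l.length => i < j ∧ (l.get j).1 = (l.get i).1), x (l.get j)) +
    (∑ j ∈ Finset.univ.filter
        (fun j : Fin l.length => i < j ∧ (l.get j).2 = (l.get i).2 ∧
          Nat.dist (l.get j).1.val (l.get i).1.val < d), x (l.get j))
    ≤ θ - x (l.get i)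

/-!
Distance matchings are the independent sets of a conflict graph on the edges, and the bound follows
by the local ratio method. Process the edges in the given order. An edge `e` of nonpositive weight
is dropped; otherwise the weight of `e` is subtracted from `e` and from all later edges in conflict
with `e`, and the remaining edges are handled recursively. By flatness the subtraction lowers
`∑ w x` by at most `θ w(e)`. When the recursion returns, `e` is added to the matching unless it is
blocked, and in both cases undoing the subtraction raises the weight of the matching by at least
`w(e)`.
-/

section LocalRatio

variable {ι R : Type*} (G : SimpleGraph ι) [DecidableRel G.Adj]

/-- The weight function left by a local ratio step at the vertex `a`: the weight of `a` is
subtracted from each of its neighbours. The value at `a` itself, which the step discards, is left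
unchanged. -/
def residualWeight [Sub R] [Zero R] (w : ι → R) (a i : ι) : R :=
  w i - if G.Adj a i then w a else 0

theorem sum_residualWeight_mul [Ring R] (w x : ι → R) (a : ι) (s : Finset ι) :
    ∑ i ∈ s, residualWeight G w a i * x i =
      ∑ i ∈ s, w i * x i - w a * ∑ i ∈ s with G.Adj a i, x i := by
  simp only [residualWeight, sub_mul, ite_mul, zero_mul, sum_sub_distrib, sum_filter, mul_sum,
    mul_ite, mul_zero]

variable {G}

section OrderedGroup

variable [AddCommGroup R] [PartialOrder R] [IsOrderedAddMonoid R] {w : ι → R} {a : ι}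

theorem add_sum_residualWeight_le_of_adj {b : ι} {M : Finset ι} (ha : 0 ≤ w a) (hb : b ∈ M)
    (hab : G.Adj a b) : w a + ∑ i ∈ M, residualWeight G w a i ≤ ∑ i ∈ M, w i := by
  have hpaid : w a ≤ ∑ i ∈ M, if G.Adj a i then w a else 0 :=
    calc
      w a = if G.Adj a b then w a else 0 := (if_pos hab).symm
      _ ≤ _ := single_le_sum (f := fun i => if G.Adj a i then w a else 0)
        (fun i _ => by split_ifs <;> simp [ha]) hb
  simp only [residualWeight, sum_sub_distrib]
  rw [add_sub_left_comm]
  exact add_le_of_nonpos_right (sub_nonpos.2 hpaid)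

theorem exists_isIndepSet_add_sum_residualWeight_le [DecidableEq ι] {M : Finset ι}
    (hM : G.IsIndepSet M) (haM : a ∉ M) (ha : 0 ≤ w a) :
    ∃ M' ⊆ insert a M, G.IsIndepSet M' ∧
      w a + ∑ i ∈ M, residualWeight G w a i ≤ ∑ i ∈ M', w i := by
  by_cases hblocked : ∃ b ∈ M, G.Adj a b
  · obtain ⟨b, hb, hab⟩ := hblocked
    exact ⟨M, subset_insert a M, hM, add_sum_residualWeight_le_of_adj ha hb hab⟩
  · have hfree : ∀ b ∈ M, ¬G.Adj a b := fun b hb hab => hblocked ⟨b, hb, hab⟩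
    refine ⟨insert a M, Subset.rfl, ?_, ?_⟩
    · rw [coe_insert]
      exact hM.insert fun b hb _ => ⟨hfree b hb, fun hba => hfree b hb hba.symm⟩
    · rw [sum_insert haM]
      refine (congrArg (w a + ·) (sum_congr rfl fun b hb => ?_)).le
      rw [residualWeight, if_neg (hfree b hb), sub_zero]

end OrderedGroup

theorem exists_isIndepSet_sum_mul_le [LinearOrder ι] [CommRing R] [LinearOrder R]
    [IsOrderedRing R] {x : ι → R} {θ : R} (w : ι → R) (s : Finset ι) (hx : ∀ i ∈ s, 0 ≤ x i)
    (hflat : ∀ i ∈ s, x i + ∑ j ∈ s with i < j ∧ G.Adj i j, x j ≤ θ) :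
    ∃ M ⊆ s, G.IsIndepSet M ∧ ∑ i ∈ s, w i * x i ≤ θ * ∑ i ∈ M, w i := by
  induction s using Finset.induction_on_min generalizing w with
  | empty => exact ⟨∅, Subset.rfl, by simp, by simp⟩
  | insert a s hlt ih =>
    have has : a ∉ s := fun h => (hlt a h).false
    have hxs : ∀ i ∈ s, 0 ≤ x i := fun i hi => hx i (mem_insert_of_mem hi)
    have hxa : 0 ≤ x a := hx a (mem_insert_self a s)
    have hflat_s : ∀ i ∈ s, x i + ∑ j ∈ s with i < j ∧ G.Adj i j, x j ≤ θ := fun i hi => by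
      simpa [filter_insert, (hlt i hi).not_gt] using hflat i (mem_insert_of_mem hi)
    have hflat_a : x a + ∑ j ∈ s with G.Adj a j, x j ≤ θ := by
      have hlater : {j ∈ s | a < j ∧ G.Adj a j} = {j ∈ s | G.Adj a j} :=
        filter_congr fun j hj => and_iff_right (hlt j hj)
      simpa [filter_insert, hlater] using hflat a (mem_insert_self a s)
    have hθ : 0 ≤ θ :=
      (add_nonneg hxa (sum_nonneg fun j hj => hxs j (mem_filter.1 hj).1)).trans hflat_a
    rw [sum_insert has]
    rcases le_total (w a) 0 with hwa | hwa
    · obtain ⟨M, hMs, hM, hle⟩ := ih w hxs hflat_s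
      exact ⟨M, hMs.trans (subset_insert a s), hM,
        (add_le_of_nonpos_left (mul_nonpos_of_nonpos_of_nonneg hwa hxa)).trans hle⟩
    · obtain ⟨M, hMs, hM, hle⟩ := ih (residualWeight G w a) hxs hflat_s
      obtain ⟨M', hM'M, hM', hgain⟩ :=
        exists_isIndepSet_add_sum_residualWeight_le hM (fun h => has (hMs h)) hwa
      refine ⟨M', hM'M.trans (insert_subset_insert a hMs), hM', ?_⟩
      calc
        w a * x a + ∑ i ∈ s, w i * x i
            = w a * (x a + ∑ j ∈ s with G.Adj a j, x j) +
                ∑ i ∈ s, residualWeight G w a i * x i := by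
          rw [sum_residualWeight_mul]; ring
        _ ≤ w a * θ + θ * ∑ i ∈ M, residualWeight G w a i := by gcongr
        _ = θ * (w a + ∑ i ∈ M, residualWeight G w a i) := by ring
        _ ≤ θ * ∑ i ∈ M', w i := by gcongr

end LocalRatio

section ConflictGraph

/-- The graph on the pairs `(s, t)` in which two distinct pairs are adjacent when no `d`-distance
matching contains both: they share their left node, or they share their right node and their left
nodes are at distance less than `d`. -/
def conflictGraph (n : ℕ) (T : Type*) (d : ℕ) : SimpleGraph (Fin n × T) where
  Adj e f := e ≠ f ∧ (e.1 = f.1 ∨ e.2 = f.2 ∧ Nat.dist e.1.val f.1.val < d)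
  symm := ⟨fun e f h => by rwa [ne_comm, eq_comm, eq_comm (a := f.2), Nat.dist_comm]⟩
  loopless := ⟨fun _ h => h.1 rfl⟩

variable {n : ℕ} {T : Type*} [DecidableEq T] {d : ℕ}

instance : DecidableRel (conflictGraph n T d).Adj :=
  fun e f => inferInstanceAs
    (Decidable (e ≠ f ∧ (e.1 = f.1 ∨ e.2 = f.2 ∧ Nat.dist e.1.val f.1.val < d)))

theorem ddm_of_isIndepSet_conflictGraph {E M : Finset (Fin n × T)} (hME : M ⊆ E)
    (hM : (conflictGraph n T d).IsIndepSet M) : DDM d E M :=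
  ⟨hME,
    fun _ he _ hf hleft => by_contra fun hne => hM he hf hne ⟨hne, .inl hleft⟩,
    fun _ he _ hf hright hne => not_lt.1 fun hlt => hM he hf hne ⟨hne, .inr ⟨hright, hlt⟩⟩⟩

theorem IsFlatOrder.add_sum_adj_le {θ : ℝ} {x : Fin n × T → ℝ} {l : List (Fin n × T)}
    (hflat : IsFlatOrder d θ x l) (hx : ∀ e ∈ l, 0 ≤ x e) (i : Fin l.length) :
    x (l.get i) + ∑ j with i < j ∧ (conflictGraph n T d).Adj (l.get i) (l.get j), x (l.get j)
      ≤ θ := by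
  have hx_get : ∀ j, 0 ≤ x (l.get j) := fun j => hx _ (l.get_mem j)
  set sameLeft : Finset (Fin l.length) := {j | i < j ∧ (l.get j).1 = (l.get i).1}
  set nearRight : Finset (Fin l.length) :=
    {j | i < j ∧ (l.get j).2 = (l.get i).2 ∧ Nat.dist (l.get j).1.val (l.get i).1.val < d}
  have hcover : ({j | i < j ∧ (conflictGraph n T d).Adj (l.get i) (l.get j)} : Finset _) ⊆
      sameLeft ∪ nearRight := by
    intro j hj
    obtain ⟨hij, -, hleft | ⟨hright, hdist⟩⟩ := (mem_filter.1 hj).2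
    · exact mem_union_left _ (mem_filter.2 ⟨mem_univ j, hij, hleft.symm⟩)
    · rw [Nat.dist_comm] at hdist
      exact mem_union_right _ (mem_filter.2 ⟨mem_univ j, hij, hright.symm, hdist⟩)
  have hconflict := calc
    ∑ j with i < j ∧ (conflictGraph n T d).Adj (l.get i) (l.get j), x (l.get j)
        ≤ ∑ j ∈ sameLeft ∪ nearRight, x (l.get j) :=
      sum_le_sum_of_subset_of_nonneg hcover fun j _ _ => hx_get j
    _ ≤ ∑ j ∈ sameLeft, x (l.get j) + ∑ j ∈ nearRight, x (l.get j) := by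
      rw [← sum_union_inter]
      exact le_add_of_nonneg_right (sum_nonneg fun j _ => hx_get j)
    _ ≤ θ - x (l.get i) := hflat i
  linarith

theorem stmt10_general (w : Fin n × T → ℝ) {θ : ℝ} {x : Fin n × T → ℝ} {l : List (Fin n × T)}
    (hx : ∀ e ∈ l, 0 ≤ x e) (hnd : l.Nodup) (hflat : IsFlatOrder d θ x l) :
    ∃ M, DDM d l.toFinset M ∧ ∑ e ∈ l.toFinset, w e * x e ≤ θ * ∑ e ∈ M, w e := by
  have hget : Function.Injective l.get := List.nodup_iff_injective_get.1 hnd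
  obtain ⟨M, -, hM, hle⟩ :=
    exists_isIndepSet_sum_mul_le (G := (conflictGraph n T d).comap l.get) (x := x ∘ l.get)
      (w ∘ l.get) univ (fun i _ => hx _ (l.get_mem i)) fun i _ => hflat.add_sum_adj_le hx i
  rw [← Fin.univ_image_get]
  refine ⟨M.image l.get, ddm_of_isIndepSet_conflictGraph (image_subset_image M.subset_univ) ?_, ?_⟩
  · rw [coe_image]
    exact hget.injOn.pairwise_image.2 hM
  · rw [sum_image hget.injOn, sum_image hget.injOn]
    exact hle

end ConflictGraph

/-- If a feasible solution `x` of LP1 admits a `θ`-flat order of the edges, then there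
is a `d`-distance matching `M` with `θ·w(M) ≥ Σ_e w_e x_e`. -/
theorem stmt10 {n : ℕ} {T : Type*} [DecidableEq T]
    (d : ℕ) (hd : 1 ≤ d) (E : Finset (Fin n × T))
    (w : Fin n × T → ℝ) (hw : ∀ e ∈ E, 0 ≤ w e)
    (θ : ℝ) (hθ : 0 < θ) (x : Fin n × T → ℝ) (hx : FeasLP1 d E x)
    (l : List (Fin n × T)) (hnd : l.Nodup) (hlE : l.toFinset = E)
    (hflat : IsFlatOrder d θ x l) :
    ∃ M, DDM d E M ∧ ∑ e ∈ E, w e * x e ≤ θ * ∑ e ∈ M, w e := by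
  subst hlE
  exact stmt10_general w (fun e _ => hx.1 e) hnd hflat
end

section
/- Let l ∈ {1,2,3,4} and let M, M* be d-distance matchings such that M is l-locally optimal with respect to M*. Then |M*| ≤ ρ_l·|M|, where ρ₁=3, ρ₂=2, ρ₃=9/5, ρ₄=5/3. -/
open Finset

/-- The hit set `H(e, M)`: the inclusion-wise minimal subset of the `d`-distance
matching `M` whose removal makes `M ∪ {e}` a feasible `d`-distance matching. -/
def hitSet {n : ℕ} {T : Type*} [DecidableEq T] (d : ℕ) (M : Finset (Fin n × T))
    (e : Fin n × T) : Finset (Fin n × T) :=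
  (M.filter
    (fun f => f.1 = e.1 ∨ (f.2 = e.2 ∧ f.1 ≠ e.1 ∧ Nat.dist f.1.val e.1.val < d))).erase e

/-- `M` is `l`-locally optimal with respect to `M*`: there is no `X ⊆ M* ∖ M` with
`l ≥ |X| > |H(X, M)|`. -/
def LocOptWrt {n : ℕ} {T : Type*} [DecidableEq T] (d l : ℕ)
    (M Ms : Finset (Fin n × T)) : Prop :=
  ¬ ∃ X ⊆ Ms \ M, X.card ≤ l ∧ (X.biUnion (hitSet d M)).card < X.card

/-!
Consider the bipartite graph joining each edge of `M* \ M` to the edges of `M \ M*` it hits.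
An edge `s t` of `M` is hit by at most three edges of `M*`: the one at `s`, and the one at `t` on
either side of `s`. Local optimality says that Hall's condition holds for all sets of at most `l`
edges of `M* \ M`. It remains to bound `|A| / |B|` for a bipartite graph on `A` and `B` in which
the nodes of `B` have degree at most `k` and at most `l` nodes of `A` never violate Hall's
condition. This is the setting of Hurkens and Schrijver, and we follow their induction from `l` to
`l + 2`.

Let `D` be the neighbourhood of the nodes of `A` of degree one. The nodes of `A` of degree two,
with `D` deleted from `B`, again form such a graph, with `l` in place of `l + 2`: a minimal
violator `X` there has at most two edges to `D`, so adding at most two degree-one nodes to `X`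
yields a violator in the original graph. A bound `r ≥ 2` for the smaller graph gives the bound
`(k (r - 1) + r) / (2 r - 1)` for the original one by counting edges. Starting from `k` for `l = 1`
and `(k + 1) / 2` for `l = 2`, one gets `k² / (2 k - 1)` for `l = 3` and `(k² + 1) / (2 k)` for
`l = 4`; the theorem is the case `k = 3`.
-/

section DoubleCounting

variable {α β : Type*} [DecidableEq β] {A : Finset α} {B : Finset β} {N : α → Finset β} {k : ℕ}

theorem sum_card_eq_sum_degree (hN : ∀ a ∈ A, N a ⊆ B) :
    ∑ a ∈ A, #(N a) = ∑ b ∈ B, #{a ∈ A | b ∈ N a} := by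
  refine .trans ?_ (sum_card_bipartiteAbove_eq_sum_card_bipartiteBelow fun a b ↦ b ∈ N a)
  refine sum_congr rfl fun a ha ↦ ?_
  rw [bipartiteAbove, filter_mem_eq_inter, inter_eq_right.2 (hN a ha)]

theorem sum_card_le_mul_card (hN : ∀ a ∈ A, N a ⊆ B)
    (hdeg : ∀ b ∈ B, #{a ∈ A | b ∈ N a} ≤ k) : ∑ a ∈ A, #(N a) ≤ k * #B := by
  rw [sum_card_eq_sum_degree hN, mul_comm]
  exact sum_le_card_nsmul _ _ _ hdeg

theorem mul_card_le_sum_card (hN : ∀ a ∈ A, N a ⊆ B)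
    (hdeg : ∀ b ∈ B, k ≤ #{a ∈ A | b ∈ N a}) : k * #B ≤ ∑ a ∈ A, #(N a) := by
  rw [sum_card_eq_sum_degree hN, mul_comm]
  exact card_nsmul_le_sum _ _ _ hdeg

end DoubleCounting

section MinimalViolator

variable {α β : Type*} [DecidableEq β] {X : Finset α} {N : α → Finset β}

theorem card_le_card_biUnion_add_one (hproper : ∀ Y ⊂ X, #Y ≤ #(Y.biUnion N)) :
    #X ≤ #(X.biUnion N) + 1 := by
  classical
  obtain rfl | ⟨a, ha⟩ := X.eq_empty_or_nonempty
  · simp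
  calc #X = #(X.erase a) + 1 := (card_erase_add_one ha).symm
    _ ≤ #((X.erase a).biUnion N) + 1 := by gcongr; exact hproper _ (erase_ssubset ha)
    _ ≤ #(X.biUnion N) + 1 := by gcongr; exact erase_subset a X

theorem two_le_degree_of_minimal_violator (hproper : ∀ Y ⊂ X, #Y ≤ #(Y.biUnion N))
    (hviol : #(X.biUnion N) < #X) {b : β} (hb : b ∈ X.biUnion N) :
    2 ≤ #{a ∈ X | b ∈ N a} := by
  obtain ⟨a, ha, hba⟩ := mem_biUnion.1 hb
  have hssub : {a ∈ X | b ∉ N a} ⊂ X := filter_ssubset.2 ⟨a, ha, not_not.2 hba⟩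
  have hunion : ({a ∈ X | b ∉ N a} : Finset α).biUnion N ⊆ (X.biUnion N).erase b := by
    simp only [subset_iff, mem_biUnion, mem_filter, mem_erase]
    rintro c ⟨x, ⟨hx, hbx⟩, hcx⟩
    exact ⟨fun hcb ↦ hbx (hcb ▸ hcx), x, hx, hcx⟩
  have hle : #{a ∈ X | b ∉ N a} ≤ #((X.biUnion N).erase b) :=
    (hproper _ hssub).trans (card_le_card hunion)
  have hsplit := card_filter_add_card_filter_not (s := X) (fun a ↦ b ∈ N a)
  have herase := card_erase_add_one hb
  lia

theorem two_mul_card_le_of_minimal_violator (hproper : ∀ Y ⊂ X, #Y ≤ #(Y.biUnion N))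
    (hviol : #(X.biUnion N) < #X) : 2 * #X ≤ ∑ a ∈ X, #(N a) + 2 := by
  have hcard := card_le_card_biUnion_add_one hproper
  have hsum : 2 * #(X.biUnion N) ≤ ∑ a ∈ X, #(N a) :=
    mul_card_le_sum_card (fun _ ha ↦ subset_biUnion_of_mem N ha)
      fun _ ↦ two_le_degree_of_minimal_violator hproper hviol
  lia

end MinimalViolator

section LocalHall

variable {α β : Type*} [DecidableEq β] {A : Finset α} {B : Finset β} {N : α → Finset β} {k l m : ℕ}

/-- Hall's condition for the neighbourhoods `N a`, `a ∈ A`, required only of the sets of at most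
`l` nodes. -/
def LocalHall (l : ℕ) (A : Finset α) (N : α → Finset β) : Prop :=
  ∀ X ⊆ A, #X ≤ l → #X ≤ #(X.biUnion N)

/-- The nodes of `A` of degree one. -/
def singles (A : Finset α) (N : α → Finset β) : Finset α := {a ∈ A | #(N a) = 1}

/-- The nodes of `A` of degree two. -/
def pairs (A : Finset α) (N : α → Finset β) : Finset α := {a ∈ A | #(N a) = 2}

/-- The set `D` of neighbours of the nodes of degree one. -/
def singlesCover (A : Finset α) (N : α → Finset β) : Finset β := (singles A N).biUnion N

/-- The neighbourhoods that remain when `D` is deleted. -/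
def residualNbhd (A : Finset α) (N : α → Finset β) (a : α) : Finset β := N a \ singlesCover A N

namespace LocalHall

theorem mono (h : LocalHall m A N) (hlm : l ≤ m) : LocalHall l A N :=
  fun X hX hcard ↦ h X hX (hcard.trans hlm)

theorem one_le_card (h : LocalHall 1 A N) {a : α} (ha : a ∈ A) : 1 ≤ #(N a) := by
  simpa using h {a} (singleton_subset_iff.2 ha) (card_singleton a).le

theorem pairwiseDisjoint_singles (h : LocalHall 2 A N) :
    (singles A N : Set α).PairwiseDisjoint N := by
  classical
  intro a ha a' ha' hne
  simp only [singles, coe_filter, Set.mem_ofPred_eq] at ha ha'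
  have hunion : 2 ≤ #(N a ∪ N a') := by
    simpa [card_pair hne] using h {a, a'} (by simp [insert_subset_iff, ha.1, ha'.1]) card_le_two
  have hinter := card_union_add_card_inter (N a) (N a')
  rw [Function.onFun_apply, disjoint_iff_inter_eq_empty, ← card_eq_zero]
  lia

theorem card_biUnion_of_subset_singles (h : LocalHall 2 A N) {Y : Finset α}
    (hY : Y ⊆ singles A N) : #(Y.biUnion N) = #Y := by
  rw [card_biUnion fun a ha a' ha' ↦ h.pairwiseDisjoint_singles (hY ha) (hY ha'),
    card_eq_sum_ones]
  exact sum_congr rfl fun a ha ↦ (mem_filter.1 (hY ha)).2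

theorem card_singlesCover (h : LocalHall 2 A N) : #(singlesCover A N) = #(singles A N) :=
  h.card_biUnion_of_subset_singles Subset.rfl

theorem exists_subset_singles_biUnion_eq (h : LocalHall 2 A N) {W : Finset β}
    (hW : W ⊆ singlesCover A N) : ∃ Y ⊆ singles A N, Y.biUnion N = W ∧ #Y = #W := by
  have hunion : ({a ∈ singles A N | N a ⊆ W} : Finset α).biUnion N = W := by
    refine (biUnion_subset.2 fun a ha ↦ (mem_filter.1 ha).2).antisymm fun b hb ↦ ?_
    obtain ⟨a, ha, hba⟩ := mem_biUnion.1 (hW hb)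
    obtain ⟨c, hc⟩ := card_eq_one.1 (mem_filter.1 ha).2
    obtain rfl : b = c := by simpa [hc] using hba
    exact mem_biUnion.2 ⟨a, mem_filter.2 ⟨ha, by simpa [hc] using hb⟩, hba⟩
  refine ⟨_, filter_subset _ _, hunion, ?_⟩
  rw [← h.card_biUnion_of_subset_singles (filter_subset _ _), hunion]

theorem card_le_card_biUnion_residualNbhd (h : LocalHall (l + 2) A N) {X : Finset α}
    (hX : X ⊆ pairs A N) (hcard : #X ≤ l)
    (hcover : #(X.biUnion N ∩ singlesCover A N) ≤ 2) :
    #X ≤ #(X.biUnion (residualNbhd A N)) := by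
  classical
  obtain ⟨Y, hY, hunionY, hcardY⟩ :=
    (h.mono (Nat.le_add_left 2 l)).exists_subset_singles_biUnion_eq
      (inter_subset_right (s₁ := X.biUnion N))
  have hdisj : Disjoint X Y := disjoint_left.2 fun a haX haY ↦ by
    have htwo := (mem_filter.1 (hX haX)).2
    have hone := (mem_filter.1 (hY haY)).2
    lia
  have hcardXY : #(X ∪ Y) = #X + #Y := card_union_of_disjoint hdisj
  have hXY : X ∪ Y ⊆ A :=
    union_subset (hX.trans (filter_subset _ _)) (hY.trans (filter_subset _ _))
  have hunion : (X ∪ Y).biUnion N ⊆ X.biUnion (residualNbhd A N) ∪ Y.biUnion N := by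
    rw [union_biUnion, hunionY]
    intro b
    simp only [residualNbhd, mem_union, mem_biUnion, mem_inter, mem_sdiff]
    grind
  have hhall : #X + #Y ≤ #(X.biUnion (residualNbhd A N)) + #(Y.biUnion N) :=
    calc #X + #Y = #(X ∪ Y) := hcardXY.symm
      _ ≤ #((X ∪ Y).biUnion N) := h _ hXY (by lia)
      _ ≤ #(X.biUnion (residualNbhd A N) ∪ Y.biUnion N) := card_le_card hunion
      _ ≤ _ := card_union_le _ _
  rw [hunionY] at hhall
  lia

theorem pairs_residualNbhd (h : LocalHall (l + 2) A N) :
    LocalHall l (pairs A N) (residualNbhd A N) := by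
  intro X
  induction X using Finset.strongInduction with
  | H X ih =>
    intro hX hcard
    by_contra! hviol
    have hproper : ∀ Y ⊂ X, #Y ≤ #(Y.biUnion (residualNbhd A N)) := fun Y hYX ↦
      ih Y hYX (hYX.subset.trans hX) ((card_le_card hYX.subset).trans hcard)
    have hresidual := two_mul_card_le_of_minimal_violator hproper hviol
    have hsplit : ∑ a ∈ X, #(N a ∩ singlesCover A N) + ∑ a ∈ X, #(residualNbhd A N a) =
        2 * #X := by
      rw [← sum_add_distrib, mul_comm]
      exact sum_const_nat fun a ha ↦
        (card_inter_add_card_sdiff _ _).trans (mem_filter.1 (hX ha)).2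
    have hcover : #(X.biUnion N ∩ singlesCover A N) ≤ ∑ a ∈ X, #(N a ∩ singlesCover A N) := by
      rw [biUnion_inter]
      exact card_biUnion_le
    exact hviol.not_ge (h.card_le_card_biUnion_residualNbhd hX hcard (by lia))

end LocalHall

/-- A bipartite graph on `A` and `B`, given by the neighbourhoods `N a ⊆ B` of the nodes `a ∈ A`,
in which the nodes of `B` have degree at most `k` and Hall's condition holds for at most `l` nodes
of `A`. -/
structure LocalHallGraph (k l : ℕ) (A : Finset α) (B : Finset β) (N : α → Finset β) : Prop where
  subset : ∀ a ∈ A, N a ⊆ B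
  degree_le : ∀ b ∈ B, #{a ∈ A | b ∈ N a} ≤ k
  hall : LocalHall l A N

namespace LocalHallGraph

theorem pairs_residualNbhd (h : LocalHallGraph k (l + 2) A B N) :
    LocalHallGraph k l (pairs A N) (B \ singlesCover A N) (residualNbhd A N) where
  subset a ha := sdiff_subset_sdiff (h.subset a (mem_filter.1 ha).1) Subset.rfl
  degree_le b hb := by
    refine (card_le_card fun a ha ↦ ?_).trans (h.degree_le b (mem_sdiff.1 hb).1)
    obtain ⟨hpair, hba⟩ := mem_filter.1 ha
    exact mem_filter.2 ⟨(mem_filter.1 hpair).1, (mem_sdiff.1 hba).1⟩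
  hall := h.hall.pairs_residualNbhd

theorem sum_card_le (h : LocalHallGraph k l A B N) : ∑ a ∈ A, #(N a) ≤ k * #B :=
  sum_card_le_mul_card h.subset h.degree_le

theorem singlesCover_subset (h : LocalHallGraph k l A B N) : singlesCover A N ⊆ B :=
  biUnion_subset.2 fun a ha ↦ h.subset a (mem_filter.1 ha).1

theorem card_le_of_one (h : LocalHallGraph k 1 A B N) : #A ≤ k * #B :=
  calc #A = ∑ _a ∈ A, 1 := card_eq_sum_ones A
    _ ≤ ∑ a ∈ A, #(N a) := sum_le_sum fun _ ↦ h.hall.one_le_card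
    _ ≤ k * #B := h.sum_card_le

theorem card_le_of_two (h : LocalHallGraph k 2 A B N) : 2 * #A ≤ (k + 1) * #B := by
  have hsingles : #(singles A N) ≤ #B :=
    h.hall.card_singlesCover ▸ card_le_card h.singlesCover_subset
  calc 2 * #A = ∑ _a ∈ A, 2 := by rw [sum_const, smul_eq_mul, mul_comm]
    _ ≤ ∑ a ∈ A, (#(N a) + if #(N a) = 1 then 1 else 0) := by
      refine sum_le_sum fun a ha ↦ ?_
      have hpos := (h.hall.mono one_le_two).one_le_card ha
      split_ifs <;> lia
    _ = ∑ a ∈ A, #(N a) + #(singles A N) := by rw [sum_add_distrib, singles, card_filter]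
    _ ≤ k * #B + #B := add_le_add h.sum_card_le hsingles
    _ = (k + 1) * #B := by ring

theorem card_le_of_pairs {r : ℝ} (h : LocalHallGraph k 2 A B N) (hr : 2 ≤ r)
    (hpairs : (#(pairs A N) : ℝ) ≤ r * #(B \ singlesCover A N)) :
    (2 * r - 1) * #A ≤ (k * (r - 1) + r) * #B := by
  have hweight : ∀ a ∈ A, 2 * r - 1 ≤
      (r - 1) * #(N a) + (if #(N a) = 2 then 1 else 0) + r * if #(N a) = 1 then 1 else 0 := by
    intro a ha
    obtain hone | htwo | hthree : #(N a) = 1 ∨ #(N a) = 2 ∨ 3 ≤ #(N a) := by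
      have hpos := (h.hall.mono one_le_two).one_le_card ha
      lia
    · rw [hone, if_neg (by norm_num), if_pos rfl]
      push_cast
      linarith
    · rw [htwo, if_pos rfl, if_neg (by norm_num)]
      push_cast
      linarith
    · have hcast : (3 : ℝ) ≤ #(N a) := mod_cast hthree
      rw [if_neg (by lia), if_neg (by lia)]
      nlinarith
  have hsum : (∑ a ∈ A, #(N a) : ℝ) ≤ k * #B := mod_cast h.sum_card_le
  have hcover : (#(B \ singlesCover A N) + #(singles A N) : ℝ) = #B := by
    rw [← h.hall.card_singlesCover]
    exact_mod_cast card_sdiff_add_card_eq_card h.singlesCover_subset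
  calc (2 * r - 1) * #A = ∑ _a ∈ A, (2 * r - 1) := by rw [sum_const, nsmul_eq_mul, mul_comm]
    _ ≤ (r - 1) * ∑ a ∈ A, (#(N a) : ℝ) + #(pairs A N) + r * #(singles A N) := by
      refine (sum_le_sum hweight).trans_eq ?_
      simp only [sum_add_distrib, ← mul_sum, sum_boole, pairs, singles]
    _ ≤ (r - 1) * (k * #B) + r * #(B \ singlesCover A N) + r * #(singles A N) := by
      gcongr
      linarith
    _ = (k * (r - 1) + r) * #B := by rw [← hcover]; ring

theorem card_le_of_three (h : LocalHallGraph k 3 A B N) (hk : 2 ≤ k) :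
    (2 * k - 1 : ℝ) * #A ≤ k ^ 2 * #B := by
  have hpairs : (#(pairs A N) : ℝ) ≤ k * #(B \ singlesCover A N) :=
    mod_cast h.pairs_residualNbhd.card_le_of_one
  have htwo : LocalHallGraph k 2 A B N := { h with hall := h.hall.mono (by norm_num) }
  exact (htwo.card_le_of_pairs (mod_cast hk) hpairs).trans_eq (by ring)

theorem card_le_of_four (h : LocalHallGraph k 4 A B N) (hk : 3 ≤ k) :
    (2 * k : ℝ) * #A ≤ (k ^ 2 + 1) * #B := by
  have hresidual : (2 * #(pairs A N) : ℝ) ≤ (k + 1) * #(B \ singlesCover A N) :=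
    mod_cast h.pairs_residualNbhd.card_le_of_two
  have htwo : LocalHallGraph k 2 A B N := { h with hall := h.hall.mono (by norm_num) }
  have hk' : (3 : ℝ) ≤ k := mod_cast hk
  have hbound := htwo.card_le_of_pairs (r := (k + 1) / 2) (by linarith) (by linarith)
  linarith

end LocalHallGraph

end LocalHall

section DistanceMatching

variable {n d l : ℕ} {T : Type*} [DecidableEq T] {E M Ms : Finset (Fin n × T)}

theorem DDM.card_filter_fst_eq_le_one (hM : DDM d E M) (s : Fin n) :
    #{e ∈ M | e.1 = s} ≤ 1 := by
  refine card_le_one.2 fun e he f hf ↦ ?_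
  rw [mem_filter] at he hf
  exact hM.2.1 e he.1 f hf.1 (he.2.trans hf.2.symm)

theorem DDM.card_window_le_one (hM : DDM d E M) (t : T) (i : ℕ) :
    #{e ∈ M | e.2 = t ∧ i ≤ e.1 ∧ e.1 < i + d} ≤ 1 := by
  refine card_le_one.2 fun e he f hf ↦ ?_
  rw [mem_filter] at he hf
  by_contra hne
  have hdist := hM.2.2 e he.1 f hf.1 (he.2.1.trans hf.2.1.symm) hne
  rw [Nat.dist] at hdist
  lia

theorem DDM.card_filter_mem_hitSet_le_three (hMs : DDM d E Ms) (f : Fin n × T) :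
    #{e ∈ Ms \ M | f ∈ hitSet d M e} ≤ 3 := by
  set same := {e ∈ Ms | e.1 = f.1}
  -- Truncation makes this window start at `0` when `f.1 < d`; it still contains all `i < f.1`.
  set before := {e ∈ Ms | e.2 = f.2 ∧ f.1 - d ≤ (e.1 : ℕ) ∧ e.1 < f.1 - d + d}
  set after := {e ∈ Ms | e.2 = f.2 ∧ f.1 + 1 ≤ (e.1 : ℕ) ∧ e.1 < f.1 + 1 + d}
  have hsub : {e ∈ Ms \ M | f ∈ hitSet d M e} ⊆ same ∪ before ∪ after := by
    intro e he
    simp only [hitSet, Nat.dist, mem_filter, mem_sdiff, mem_erase] at he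
    simp only [same, before, after, mem_union, mem_filter]
    grind
  have hcard : #(same ∪ before ∪ after) ≤ #same + #before + #after :=
    (card_union_le _ _).trans (by gcongr; exact card_union_le _ _)
  have hsame : #same ≤ 1 := hMs.card_filter_fst_eq_le_one f.1
  have hbefore : #before ≤ 1 := hMs.card_window_le_one f.2 (f.1 - d)
  have hafter : #after ≤ 1 := hMs.card_window_le_one f.2 (f.1 + 1)
  exact (card_le_card hsub).trans (by lia)

theorem DDM.hitSet_subset_sdiff (hMs : DDM d E Ms) {e : Fin n × T} (he : e ∈ Ms) :
    hitSet d M e ⊆ M \ Ms := by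
  intro f hf
  simp only [hitSet, mem_filter, mem_erase] at hf
  obtain ⟨hne, hfM, hconflict⟩ := hf
  refine mem_sdiff.2 ⟨hfM, fun hfMs ↦ ?_⟩
  rcases hconflict with hfst | ⟨hsnd, -, hdist⟩
  · exact hne (hMs.2.1 f hfMs e he hfst)
  · exact (hMs.2.2 f hfMs e he hsnd hne).not_gt hdist

theorem LocOptWrt.localHall (hloc : LocOptWrt d l M Ms) :
    LocalHall l (Ms \ M) (hitSet d M) := by
  intro X hX hcard
  by_contra! hviol
  exact hloc ⟨X, hX, hcard, hviol⟩

theorem LocOptWrt.localHallGraph (hloc : LocOptWrt d l M Ms) (hMs : DDM d E Ms) :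
    LocalHallGraph 3 l (Ms \ M) (M \ Ms) (hitSet d M) where
  subset _ he := hMs.hitSet_subset_sdiff (mem_sdiff.1 he).1
  degree_le f _ := hMs.card_filter_mem_hitSet_le_three f
  hall := hloc.localHall

end DistanceMatching

theorem card_le_mul_card_of_card_sdiff_le {α : Type*} [DecidableEq α] {s t : Finset α} {r : ℝ}
    (hr : 1 ≤ r) (h : (#(s \ t) : ℝ) ≤ r * #(t \ s)) : (#s : ℝ) ≤ r * #t := by
  have hs : (#(s \ t) + #(s ∩ t) : ℝ) = #s := mod_cast card_sdiff_add_card_inter s t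
  have ht : (#(t \ s) + #(s ∩ t) : ℝ) = #t := by
    rw [inter_comm]
    exact_mod_cast card_sdiff_add_card_inter t s
  have hinter : (#(s ∩ t) : ℝ) ≤ r * #(s ∩ t) := le_mul_of_one_le_left (Nat.cast_nonneg _) hr
  calc (#s : ℝ) ≤ r * #(t \ s) + r * #(s ∩ t) := hs ▸ add_le_add h hinter
    _ = r * #t := by rw [← mul_add, ht]

theorem stmt14_general {n : ℕ} {T : Type*} [DecidableEq T] (d l : ℕ)
    (E M Ms : Finset (Fin n × T)) (hMs : DDM d E Ms) (hloc : LocOptWrt d l M Ms) (ρ : ℝ)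
    (hρ : (l = 1 ∧ ρ = 3) ∨ (l = 2 ∧ ρ = 2) ∨ (l = 3 ∧ ρ = 9 / 5) ∨ (l = 4 ∧ ρ = 5 / 3)) :
    (Ms.card : ℝ) ≤ ρ * M.card := by
  have hgraph := hloc.localHallGraph hMs
  apply card_le_mul_card_of_card_sdiff_le
  · rcases hρ with ⟨-, rfl⟩ | ⟨-, rfl⟩ | ⟨-, rfl⟩ | ⟨-, rfl⟩ <;> norm_num
  rcases hρ with ⟨rfl, rfl⟩ | ⟨rfl, rfl⟩ | ⟨rfl, rfl⟩ | ⟨rfl, rfl⟩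
  · exact_mod_cast hgraph.card_le_of_one
  · have hbound : (2 * #(Ms \ M) : ℝ) ≤ (3 + 1) * #(M \ Ms) := mod_cast hgraph.card_le_of_two
    linarith
  · have hbound := hgraph.card_le_of_three (by norm_num)
    push_cast at hbound
    linarith
  · have hbound := hgraph.card_le_of_four le_rfl
    push_cast at hbound
    linarith

/-- If `M` is `l`-locally optimal with respect to `M*` for `l ∈ {1,2,3,4}`, then
`|M*| ≤ ρ_l·|M|` where `ρ₁ = 3`, `ρ₂ = 2`, `ρ₃ = 9/5`, `ρ₄ = 5/3`. -/
theorem stmt14 {n : ℕ} {T : Type*} [DecidableEq T]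
    (d l : ℕ) (hd : 1 ≤ d) (E M Ms : Finset (Fin n × T))
    (hM : DDM d E M) (hMs : DDM d E Ms) (hloc : LocOptWrt d l M Ms)
    (ρ : ℝ)
    (hρ : (l = 1 ∧ ρ = 3) ∨ (l = 2 ∧ ρ = 2) ∨ (l = 3 ∧ ρ = 9 / 5) ∨
      (l = 4 ∧ ρ = 5 / 3)) :
    (Ms.card : ℝ) ≤ ρ * M.card := by
  exact stmt14_general d l E M Ms hMs hloc ρ hρ
end
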